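/- For every L > 0, m > 0 and K > 0 there exists a constant C₁ > 0, depending only on L, m and K, such that for every T > 0, λ ≥ 1, ε > 0 and every regularized solution u on [0,T] with ∫₀^L u(0,x) dx ≤ m and ∫₀^L u_x(0,x)² dx ≤ K², one has 0 < u(t,x) ≤ C₁ for all (t,x) ∈ [0,T] × 𝕋_L. -/

import Mathlib

/-!
Both the mass `∫ u` and the Dirichlet energy `∫ u_x²` are nonincreasing in time. For the mass, the
flux term integrates to zero over a period and `u^λ > 0` (`mass_dissipation`). For the energy,
integration by parts gives
`½ d/dt ∫ u_x² = -∫ u_xx u_t = -∫ f_ε(u) u_xxx² - λ ∫ u^(λ-1) u_x² ≤ 0` (`energy_dissipation`).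
Hence at every time the mass is at most `m` and the energy at most `K²`, and a one-dimensional
Sobolev-type estimate (`sup_bound`) yields `u ≤ m / L + L + K²`.

Time derivatives are only taken on the open strip `(0,T) × ℝ`, where `fderiv` and the symmetry of
second derivatives are available; monotonicity extends to `[0,T]` since both integrals are
continuous there (`integral_strip_le`).
-/

open MeasureTheory Set

noncomputable section

/-- The regularized mobility `f_ε(s) = s⁴ / (ε + s²)` (which also equals `0` at `s = 0`). -/
def fe (ε s : ℝ) : ℝ := s ^ 4 / (ε + s ^ 2)

/-- A regularized solution on `[0,T]`: a function `u`, smooth on `[0,T] × ℝ` and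
`L`-periodic in `x`, positive everywhere, satisfying
`u_t + ∂_x(f_ε(u) ∂_x³ u) + u^λ = 0` on `[0,T] × ℝ`. -/
def IsRegSol (L T lam ε : ℝ) (u : ℝ → ℝ → ℝ) : Prop :=
  ContDiffOn ℝ (⊤ : ℕ∞) (fun p : ℝ × ℝ => u p.1 p.2)
      (Set.Icc (0 : ℝ) T ×ˢ (Set.univ : Set ℝ)) ∧
  (∀ t x : ℝ, u t (x + L) = u t x) ∧
  (∀ t x : ℝ, 0 < u t x) ∧
  (∀ t ∈ Set.Icc (0 : ℝ) T, ∀ x : ℝ,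
    derivWithin (fun s => u s x) (Set.Icc (0 : ℝ) T) t
      + deriv (fun y => fe ε (u t y) * iteratedDeriv 3 (u t) y) x
      + u t x ^ lam = 0)

open scoped Topology ContDiff

/-! ### Periodic functions of one variable -/

lemma deriv_periodic {L : ℝ} {F : ℝ → ℝ} (pF : ∀ x, F (x + L) = F x) (x : ℝ) :
    deriv F (x + L) = deriv F x := by
  rw [← deriv_comp_add_const]
  congr 1
  exact funext pF

lemma integral_mul_deriv_periodic {L : ℝ} {F G : ℝ → ℝ} (hF : ContDiff ℝ 1 F)
    (hG : ContDiff ℝ 1 G) (pF : ∀ x, F (x + L) = F x) (pG : ∀ x, G (x + L) = G x) :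
    ∫ x in (0 : ℝ)..L, F x * deriv G x = - ∫ x in (0 : ℝ)..L, deriv F x * G x := by
  rw [intervalIntegral.integral_mul_deriv_eq_deriv_mul (u := F) (v := G) (u' := deriv F)
    (v' := deriv G)
    (fun x _ => (hF.differentiable one_ne_zero x).hasDerivAt)
    (fun x _ => (hG.differentiable one_ne_zero x).hasDerivAt)
    ((hF.continuous_deriv le_rfl).intervalIntegrable _ _)
    ((hG.continuous_deriv le_rfl).intervalIntegrable _ _)]
  have h1 := pF 0
  have h2 := pG 0
  rw [zero_add] at h1 h2
  rw [h1, h2]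
  ring

/-- A periodic function with bounded integral and Dirichlet energy is bounded: for all `y` in the
period cell, `|v x - v y| ≤ ∫ |v'| ≤ ∫ (1 + v'²)`, and averaging over `y` gives the claim. -/
lemma sup_bound {L m K : ℝ} (hL : 0 < L) {v : ℝ → ℝ} (hv : ContDiff ℝ 1 v)
    (pv : ∀ x, v (x + L) = v x) (hm : ∫ x in (0 : ℝ)..L, v x ≤ m)
    (hK : ∫ x in (0 : ℝ)..L, (deriv v x) ^ 2 ≤ K ^ 2) (x : ℝ) :
    v x ≤ m / L + L + K ^ 2 := by
  obtain ⟨x', hx', hxx⟩ := Function.Periodic.exists_mem_Ico₀ (f := v) pv hL x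
  rw [hxx]
  have cd := hv.continuous_deriv le_rfl
  have key : ∀ y ∈ Icc 0 L, v x' - (L + K ^ 2) ≤ v y := by
    intro y hy
    have h1 : v x' - v y = ∫ z in y..x', deriv v z :=
      (intervalIntegral.integral_deriv_eq_sub
        (fun z _ => hv.differentiable one_ne_zero z) (cd.intervalIntegrable _ _)).symm
    have h2 : v x' - v y ≤ ∫ z in Set.uIoc y x', (1 + (deriv v z) ^ 2) := by
      rw [h1]
      refine (le_abs_self _).trans ?_
      rw [← Real.norm_eq_abs]
      refine intervalIntegral.norm_integral_le_integral_norm_uIoc.trans ?_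
      refine setIntegral_mono ?_ ?_ ?_
      · exact (cd.norm.intervalIntegrable y x').def'
      · exact ((continuous_const.add (cd.pow 2)).intervalIntegrable y x').def'
      · intro z
        simp only [Real.norm_eq_abs]
        nlinarith [sq_abs (deriv v z), sq_nonneg (|deriv v z| - 1), abs_nonneg (deriv v z)]
    have h3 : ∫ z in Set.uIoc y x', (1 + (deriv v z) ^ 2) ≤
        ∫ z in Set.Ioc 0 L, (1 + (deriv v z) ^ 2) := by
      refine setIntegral_mono_set ?_ ?_ ?_
      · have := ((continuous_const (y := (1 : ℝ))).add (cd.pow 2)).intervalIntegrable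
          (μ := volume) 0 L
        exact (intervalIntegrable_iff_integrableOn_Ioc_of_le hL.le).1 this
      · exact Filter.Eventually.of_forall fun z => by positivity
      · refine LE.le.eventuallyLE ?_
        refine Ioc_subset_Ioc ?_ ?_
        · exact le_min hy.1 hx'.1
        · exact max_le hy.2 hx'.2.le
    have h4 : ∫ z in (0 : ℝ)..L, (1 + (deriv v z) ^ 2) =
        (∫ _ in (0 : ℝ)..L, (1 : ℝ)) + ∫ z in (0 : ℝ)..L, (deriv v z) ^ 2 :=
      intervalIntegral.integral_add (continuous_const.intervalIntegrable _ _)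
        ((cd.pow 2).intervalIntegrable _ _)
    rw [← intervalIntegral.integral_of_le hL.le, h4, intervalIntegral.integral_const,
      smul_eq_mul] at h3
    linarith
  have h4 : ∫ _ in (0 : ℝ)..L, (v x' - (L + K ^ 2)) ≤ ∫ y in (0 : ℝ)..L, v y :=
    intervalIntegral.integral_mono_on hL.le
      (continuous_const.intervalIntegrable _ _) (hv.continuous.intervalIntegrable 0 L) key
  rw [intervalIntegral.integral_const, smul_eq_mul] at h4
  have h5 : v x' - (L + K ^ 2) ≤ m / L := by
    rw [le_div_iff₀ hL]
    linarith
  linarith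

/-! ### Dissipation at a fixed time -/

lemma fe_nonneg {ε : ℝ} (hε : 0 < ε) (s : ℝ) : 0 ≤ fe ε s := by
  unfold fe
  positivity

lemma contDiff_flux {ε : ℝ} (hε : 0 < ε) {v : ℝ → ℝ} (hv : ContDiff ℝ ∞ v) :
    ContDiff ℝ 1 (fun y => fe ε (v y) * iteratedDeriv 3 v y) := by
  have h1 : ContDiff ℝ 1 v := hv.of_le (by exact_mod_cast le_top)
  refine ContDiff.mul ?_ ?_
  · unfold fe
    exact (h1.pow 4).div (contDiff_const.add (h1.pow 2)) fun x => by positivity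
  · rw [iteratedDeriv_eq_iterate]
    exact (hv.iterate_deriv 3).of_le (by exact_mod_cast le_top)

lemma flux_periodic {L ε : ℝ} {v : ℝ → ℝ} (pv : ∀ x, v (x + L) = v x) (x : ℝ) :
    fe ε (v (x + L)) * iteratedDeriv 3 v (x + L) = fe ε (v x) * iteratedDeriv 3 v x := by
  have h : iteratedDeriv 3 v (x + L) = iteratedDeriv 3 v x := by
    simp only [iteratedDeriv_succ, iteratedDeriv_zero]
    exact deriv_periodic (deriv_periodic (deriv_periodic pv)) x
  rw [h, pv]

/-- The mass decreases: the flux term integrates to zero and `u^λ > 0`. -/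
lemma mass_dissipation {L lam ε : ℝ} (hL : 0 < L) (hε : 0 < ε) {v w : ℝ → ℝ}
    (hv : ContDiff ℝ ∞ v) (pv : ∀ x, v (x + L) = v x) (v_pos : ∀ x, 0 < v x)
    (hw : ∀ x, w x + deriv (fun y => fe ε (v y) * iteratedDeriv 3 v y) x + v x ^ lam = 0) :
    ∫ x in (0 : ℝ)..L, w x ≤ 0 := by
  have hq := contDiff_flux hε hv
  have cv : Continuous fun x => v x ^ lam :=
    hv.continuous.rpow_const fun x => Or.inl (v_pos x).ne'
  have e : ∀ x, w x = - deriv (fun y => fe ε (v y) * iteratedDeriv 3 v y) x - v x ^ lam :=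
    fun x => by linarith [hw x]
  simp_rw [e]
  have cq := hq.continuous_deriv le_rfl
  rw [intervalIntegral.integral_sub (Continuous.intervalIntegrable (by fun_prop) _ _)
    (cv.intervalIntegrable _ _), intervalIntegral.integral_neg,
    intervalIntegral.integral_deriv_eq_sub (fun z _ => hq.differentiable one_ne_zero z)
      ((hq.continuous_deriv le_rfl).intervalIntegrable _ _)]
  have h0 := flux_periodic (ε := ε) pv 0
  rw [zero_add] at h0
  have h1 : 0 ≤ ∫ x in (0 : ℝ)..L, v x ^ lam :=
    intervalIntegral.integral_nonneg hL.le fun x _ => Real.rpow_nonneg (v_pos x).le _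
  linarith

/-- The Dirichlet energy decreases: integrating by parts,
`∫ v' w' = -∫ f_ε(v) (v''')² - λ ∫ v^(λ-1) (v')²`. -/
lemma energy_dissipation {L lam ε : ℝ} (hL : 0 < L) (hlam : 1 ≤ lam) (hε : 0 < ε) {v w : ℝ → ℝ}
    (hv : ContDiff ℝ ∞ v) (pv : ∀ x, v (x + L) = v x) (v_pos : ∀ x, 0 < v x)
    (cw : ContDiff ℝ 1 w)
    (hw : ∀ x, w x + deriv (fun y => fe ε (v y) * iteratedDeriv 3 v y) x + v x ^ lam = 0) :
    ∫ x in (0 : ℝ)..L, deriv v x * deriv w x ≤ 0 := by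
  have hq := contDiff_flux hε hv
  have pq := flux_periodic (ε := ε) pv
  have e3 : iteratedDeriv 3 v = deriv (deriv (deriv v)) := by
    funext x
    simp only [iteratedDeriv_succ, iteratedDeriv_zero]
  set q := fun y => fe ε (v y) * iteratedDeriv 3 v y with hqdef
  have hp : ContDiff ℝ 1 fun x => v x ^ lam :=
    (hv.of_le (by exact_mod_cast le_top)).rpow_const_of_ne fun x => (v_pos x).ne'
  have pp : ∀ x, v (x + L) ^ lam = v x ^ lam := fun x => by rw [pv]
  have e : ∀ x, w x = - deriv q x - v x ^ lam := fun x => by linarith [hw x]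
  have pw : ∀ x, w (x + L) = w x := fun x => by rw [e, e, deriv_periodic pq, pp]
  have h1 : ContDiff ℝ ∞ (deriv v) := (contDiff_infty_iff_deriv.1 hv).2
  have h2 : ContDiff ℝ ∞ (deriv (deriv v)) := (contDiff_infty_iff_deriv.1 h1).2
  have h1' : ContDiff ℝ 1 (deriv v) := h1.of_le (by exact_mod_cast le_top)
  have h2' : ContDiff ℝ 1 (deriv (deriv v)) := h2.of_le (by exact_mod_cast le_top)
  have p1 := deriv_periodic pv
  have p2 := deriv_periodic p1
  rw [integral_mul_deriv_periodic h1' cw p1 pw]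
  have s1 : ∀ x, deriv (deriv v) x * w x =
      - (deriv (deriv v) x * deriv q x) - deriv (deriv v) x * v x ^ lam := fun x => by
    rw [e]; ring
  simp_rw [s1]
  have cq := hq.continuous_deriv le_rfl
  have c2 := h2.continuous
  have cp := hp.continuous
  rw [intervalIntegral.integral_sub (Continuous.intervalIntegrable (by fun_prop) _ _)
    (Continuous.intervalIntegrable (by fun_prop) _ _), intervalIntegral.integral_neg,
    integral_mul_deriv_periodic h2' hq p2 pq,
    ← neg_neg (∫ x in (0 : ℝ)..L, deriv (deriv v) x * v x ^ lam),
    ← integral_mul_deriv_periodic h1' hp p1 pp]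
  have i1 : 0 ≤ ∫ x in (0 : ℝ)..L, deriv (deriv (deriv v)) x * q x := by
    refine intervalIntegral.integral_nonneg hL.le fun x _ => ?_
    rw [hqdef, e3]
    have := mul_nonneg (fe_nonneg hε (v x)) (mul_self_nonneg (deriv (deriv (deriv v)) x))
    simp only
    linarith
  have i2 : 0 ≤ ∫ x in (0 : ℝ)..L, deriv v x * deriv (fun x => v x ^ lam) x := by
    refine intervalIntegral.integral_nonneg hL.le fun x _ => ?_
    have hd := ((hv.differentiable (by simp) x).hasDerivAt.rpow_const (p := lam)
      (Or.inl (v_pos x).ne')).deriv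
    rw [hd]
    have := Real.rpow_nonneg (v_pos x).le (lam - 1)
    have : 0 ≤ lam * v x ^ (lam - 1) * (deriv v x * deriv v x) := by
      have := mul_self_nonneg (deriv v x)
      positivity
    linarith
  linarith

/-! ### Integrals depending on time -/

/-- Differentiation under the integral sign for `C¹` functions on an open time strip. -/
lemma hasDerivAt_integral_strip {T L : ℝ} {g : ℝ × ℝ → ℝ}
    (hg : ContDiffOn ℝ 1 g (Ioo 0 T ×ˢ univ)) {t : ℝ} (ht : t ∈ Ioo 0 T) :
    HasDerivAt (fun s => ∫ x in (0 : ℝ)..L, g (s, x))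
      (∫ x in (0 : ℝ)..L, fderiv ℝ g (t, x) (1, 0)) t := by
  have hO : IsOpen (Ioo 0 T ×ˢ (univ : Set ℝ)) := isOpen_Ioo.prod isOpen_univ
  have cg := hg.continuousOn
  have cg' : ContinuousOn (fun p => fderiv ℝ g p (1, 0)) (Ioo 0 T ×ˢ univ) :=
    (hg.continuousOn_fderiv_of_isOpen hO le_rfl).clm_apply continuousOn_const
  have slice : ∀ {h : ℝ × ℝ → ℝ}, ContinuousOn h (Ioo 0 T ×ˢ univ) → ∀ s ∈ Ioo 0 T,
      Continuous fun x => h (s, x) := fun {h} hh s hs =>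
    hh.comp_continuous (by fun_prop) fun x => ⟨hs, mem_univ _⟩
  obtain ⟨a, ha0, hat⟩ := exists_between ht.1
  obtain ⟨b, htb, hbT⟩ := exists_between ht.2
  have hsub : Icc a b ×ˢ uIcc 0 L ⊆ Ioo 0 T ×ˢ univ := fun p hp =>
    ⟨⟨ha0.trans_le hp.1.1, hp.1.2.trans_lt hbT⟩, mem_univ _⟩
  obtain ⟨C, hC⟩ := (isCompact_Icc.prod isCompact_uIcc).exists_bound_of_continuousOn
    (cg'.mono hsub)
  refine (intervalIntegral.hasDerivAt_integral_of_dominated_loc_of_deriv_le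
    (F := fun s x => g (s, x)) (F' := fun s x => fderiv ℝ g (s, x) (1, 0))
    (bound := fun _ => C) (s := Icc a b)
    (Icc_mem_nhds hat htb) ?_ ((slice cg t ht).intervalIntegrable _ _)
    (slice cg' t ht).aestronglyMeasurable ?_ (continuous_const.intervalIntegrable _ _) ?_).2
  · filter_upwards [isOpen_Ioo.mem_nhds ht] with s hs
    exact (slice cg s hs).aestronglyMeasurable
  · exact Filter.Eventually.of_forall fun x hx s hs => hC (s, x) ⟨hs, uIoc_subset_uIcc hx⟩
  · refine Filter.Eventually.of_forall fun x hx s hs => ?_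
    have hmem := hsub (show (s, x) ∈ _ from ⟨hs, uIoc_subset_uIcc hx⟩)
    have hd := ((hg.differentiableOn one_ne_zero).differentiableAt
      (hO.mem_nhds hmem)).hasFDerivAt
    exact hd.comp_hasDerivAt s ((hasDerivAt_id s).prodMk (hasDerivAt_const s x))

lemma continuousOn_integral_strip {T L : ℝ} (hT : 0 ≤ T) {g : ℝ × ℝ → ℝ}
    (hg : ContinuousOn g (Icc 0 T ×ˢ univ)) :
    ContinuousOn (fun s => ∫ x in (0 : ℝ)..L, g (s, x)) (Icc 0 T) := by
  have h1 : Continuous fun p : ℝ × ℝ => g ((projIcc 0 T hT p.1 : ℝ), p.2) :=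
    hg.comp_continuous
      ((continuous_subtype_val.comp (continuous_projIcc.comp continuous_fst)).prodMk
        continuous_snd)
      fun p => ⟨(projIcc 0 T hT p.1).2, mem_univ _⟩
  have h2 := intervalIntegral.continuous_parametric_intervalIntegral_of_continuous'
    (μ := volume) (f := fun s x => g ((projIcc 0 T hT s : ℝ), x)) h1 0 L
  refine h2.continuousOn.congr fun s hs => ?_
  simp only [projIcc_of_mem hT hs]

/-- A spatial integral depending on time is bounded by its initial value if its density is continuous
up to the boundary and its formal time derivative is nonpositive inside. -/
lemma integral_strip_le {T L : ℝ} (hT : 0 < T) {g : ℝ × ℝ → ℝ}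
    (hc : ContinuousOn g (Icc 0 T ×ˢ univ)) (hg : ContDiffOn ℝ 1 g (Ioo 0 T ×ˢ univ))
    (hneg : ∀ t ∈ Ioo 0 T, ∫ x in (0 : ℝ)..L, fderiv ℝ g (t, x) (1, 0) ≤ 0)
    {t : ℝ} (ht : t ∈ Icc 0 T) :
    ∫ x in (0 : ℝ)..L, g (t, x) ≤ ∫ x in (0 : ℝ)..L, g (0, x) := by
  refine antitoneOn_of_deriv_nonpos (convex_Icc 0 T) (continuousOn_integral_strip hT.le hc)
    ?_ ?_ (left_mem_Icc.2 hT.le) ht ht.1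
  · rw [interior_Icc]
    exact fun s hs =>
      (hasDerivAt_integral_strip hg hs).differentiableAt.differentiableWithinAt
  · rw [interior_Icc]
    intro s hs
    rw [(hasDerivAt_integral_strip hg hs).deriv]
    exact hneg s hs

/-! ### The uniform bound -/

/-- Uniform `L^∞` bound for regularized solutions in terms of the initial mass and
initial Dirichlet energy, uniformly in `T`, `λ` and `ε`. -/
theorem regularized_uniform_sup_bound
    (L m K : ℝ) (hL : 0 < L) (hm : 0 < m) (hK : 0 < K) :
    ∃ C₁ : ℝ, 0 < C₁ ∧
      ∀ T lam ε : ℝ, 0 < T → 1 ≤ lam → 0 < ε → ∀ u : ℝ → ℝ → ℝ,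
        IsRegSol L T lam ε u →
        ((∫ x in (0 : ℝ)..L, u 0 x) ≤ m) →
        ((∫ x in (0 : ℝ)..L, (deriv (u 0) x) ^ 2) ≤ K ^ 2) →
        ∀ t ∈ Set.Icc (0 : ℝ) T, ∀ x : ℝ, 0 < u t x ∧ u t x ≤ C₁ := by
  refine ⟨m / L + L + K ^ 2, by positivity, ?_⟩
  rintro T lam ε hT hlam hε u ⟨hu, pu, u_pos, pde⟩ hmass henergy t ht x
  refine ⟨u_pos t x, ?_⟩
  set U : ℝ × ℝ → ℝ := fun p => u p.1 p.2 with hU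
  have hO : IsOpen (Ioo 0 T ×ˢ (univ : Set ℝ)) := isOpen_Ioo.prod isOpen_univ
  have hsub : Ioo 0 T ×ˢ (univ : Set ℝ) ⊆ Icc 0 T ×ˢ univ :=
    prod_mono Ioo_subset_Icc_self le_rfl
  have hS : UniqueDiffOn ℝ (Icc 0 T ×ˢ (univ : Set ℝ)) :=
    (uniqueDiffOn_Icc hT).prod uniqueDiffOn_univ
  have huO : ContDiffOn ℝ ∞ U (Ioo 0 T ×ˢ univ) := hu.mono hsub
  have slice : ∀ s ∈ Icc 0 T, ContDiff ℝ ∞ (u s) := fun s hs => by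
    have : ContDiff ℝ ∞ (U ∘ fun y => (s, y)) :=
      hu.comp_contDiff (by fun_prop) fun y => ⟨hs, mem_univ _⟩
    exact this
  -- Up to the boundary `t = 0, T`, the spatial derivative is a component of `fderivWithin`.
  have dxW : ∀ s ∈ Icc 0 T, ∀ y,
      deriv (u s) y = fderivWithin ℝ U (Icc 0 T ×ˢ univ) (s, y) (0, 1) := fun s hs y => by
    have hd := ((hu.differentiableOn (by simp)) (s, y) ⟨hs, mem_univ _⟩).hasFDerivWithinAt
    have hc := hd.comp_hasDerivWithinAt (s := univ) y
      ((hasDerivAt_const y s).prodMk (hasDerivAt_id y)).hasDerivWithinAt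
      (fun z _ => ⟨hs, mem_univ _⟩)
    exact (hasDerivWithinAt_univ.1 hc).deriv
  have dx : ∀ s ∈ Ioo 0 T, ∀ y, deriv (u s) y = fderiv ℝ U (s, y) (0, 1) := fun s hs y => by
    rw [dxW s (Ioo_subset_Icc_self hs) y, fderivWithin_of_mem_nhds]
    exact Filter.mem_of_superset (hO.mem_nhds ⟨hs, mem_univ _⟩) hsub
  have dt : ∀ s ∈ Ioo 0 T, ∀ y,
      derivWithin (fun r => u r y) (Icc 0 T) s = fderiv ℝ U (s, y) (1, 0) := fun s hs y => by
    rw [derivWithin_of_mem_nhds (Icc_mem_nhds hs.1 hs.2)]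
    have hd := ((huO.differentiableOn (by simp)).differentiableAt
      (hO.mem_nhds (show (s, y) ∈ Ioo 0 T ×ˢ (univ : Set ℝ) from ⟨hs, mem_univ y⟩))).hasFDerivAt
    exact (hd.comp_hasDerivAt s ((hasDerivAt_id s).prodMk (hasDerivAt_const s y))).deriv
  have hDU : ContDiffOn ℝ ∞ (fderiv ℝ U) (Ioo 0 T ×ˢ univ) :=
    huO.fderiv_of_isOpen hO (by simp)
  have hDdiff : ∀ s ∈ Ioo 0 T, ∀ y, DifferentiableAt ℝ (fderiv ℝ U) (s, y) := fun s hs y =>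
    (hDU.differentiableOn (by simp)).differentiableAt (hO.mem_nhds ⟨hs, mem_univ y⟩)
  have eqn : ∀ s ∈ Ioo 0 T, ∀ y, fderiv ℝ U (s, y) (1, 0)
      + deriv (fun y => fe ε (u s y) * iteratedDeriv 3 (u s) y) y + u s y ^ lam = 0 :=
    fun s hs y => by rw [← dt s hs y]; exact pde s (Ioo_subset_Icc_self hs) y
  have mass : ∫ y in (0 : ℝ)..L, u t y ≤ m := by
    refine (integral_strip_le (g := U) hT hu.continuousOn
      (huO.of_le (by exact_mod_cast le_top)) (fun s hs => ?_) ht).trans hmass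
    exact mass_dissipation hL hε (slice s (Ioo_subset_Icc_self hs)) (pu s) (u_pos s) (eqn s hs)
  have energy : ∫ y in (0 : ℝ)..L, (deriv (u t) y) ^ 2 ≤ K ^ 2 := by
    refine (integral_strip_le (g := fun p => (deriv (u p.1) p.2) ^ 2) hT ?_ ?_
      (fun s hs => ?_) ht).trans henergy
    · refine ContinuousOn.pow (ContinuousOn.congr
        ((hu.continuousOn_fderivWithin hS (by simp)).clm_apply
          (continuousOn_const (c := ((0 : ℝ), (1 : ℝ))))) fun p hp => dxW p.1 hp.1 p.2) 2
    · refine ContDiffOn.pow (ContDiffOn.congr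
        ((hDU.of_le (by exact_mod_cast le_top)).clm_apply
          (contDiffOn_const (c := ((0 : ℝ), (1 : ℝ))))) fun p hp => dx p.1 hp.1 p.2) 2
    · set w : ℝ → ℝ := fun y => fderiv ℝ U (s, y) (1, 0) with hw
      have cw : ContDiff ℝ 1 w := by
        have : ContDiff ℝ 1 (fderiv ℝ U ∘ fun y => (s, y)) :=
          (hDU.of_le (by exact_mod_cast le_top)).comp_contDiff (by fun_prop)
            fun y => ⟨hs, mem_univ _⟩
        exact this.clm_apply contDiff_const
      -- Symmetry of second derivatives turns `∂ₜ (u_x)²` into `2 u_x ∂ₓ u_t`.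
      have key : ∀ y, fderiv ℝ (fun p : ℝ × ℝ => (deriv (u p.1) p.2) ^ 2) (s, y) (1, 0)
          = 2 * (deriv (u s) y * deriv w y) := fun y => by
        have hmem : Ioo 0 T ×ˢ (univ : Set ℝ) ∈ 𝓝 (s, y) := hO.mem_nhds ⟨hs, mem_univ y⟩
        have hev : (fun p : ℝ × ℝ => (deriv (u p.1) p.2) ^ 2) =ᶠ[𝓝 (s, y)]
            fun p => (fderiv ℝ U p (0, 1)) ^ 2 := by
          filter_upwards [hmem] with p hp
          rw [dx p.1 hp.1 p.2]
        have hD := (hDdiff s hs y).hasFDerivAt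
        have happ : HasFDerivAt (fun p => fderiv ℝ U p (0, 1))
            ((fderiv ℝ (fderiv ℝ U) (s, y)).flip (0, 1)) (s, y) := by
          simpa using hD.clm_apply (hasFDerivAt_const ((0 : ℝ), (1 : ℝ)) (s, y))
        have hwd : deriv w y = fderiv ℝ (fderiv ℝ U) (s, y) (0, 1) (1, 0) := by
          have happ' : HasFDerivAt (fun p => fderiv ℝ U p (1, 0))
              ((fderiv ℝ (fderiv ℝ U) (s, y)).flip (1, 0)) (s, y) := by
            simpa using hD.clm_apply (hasFDerivAt_const ((1 : ℝ), (0 : ℝ)) (s, y))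
          exact (happ'.comp_hasDerivAt y
            ((hasDerivAt_const y s).prodMk (hasDerivAt_id y))).deriv
        have hsym : IsSymmSndFDerivAt ℝ U (s, y) :=
          (huO.contDiffAt hmem).isSymmSndFDerivAt (by
            rw [minSmoothness_of_isRCLikeNormedField]; exact WithTop.coe_le_coe.2 le_top)
        rw [hev.fderiv_eq, (happ.pow 2).fderiv, hwd, hsym (0, 1) (1, 0), dx s hs y]
        simp
        ring
      simp_rw [key]
      rw [intervalIntegral.integral_const_mul]
      have := energy_dissipation hL hlam hε (slice s (Ioo_subset_Icc_self hs)) (pu s) (u_pos s)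
        cw (eqn s hs)
      linarith
  exact sup_bound hL ((slice t ht).of_le (by exact_mod_cast le_top)) (pu t) mass energy x

end
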